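/- arXiv:2011.12800 — 5 statements merged into one kernel-verified Lean document; each statement's English description precedes it below -/
import Mathlib

section
/- Let H and K be complex Hilbert spaces and let A : H → K be a compact linear operator. Then A admits a singular value decomposition: there exist r ∈ ℕ ∪ {∞}, a nonincreasing family of strictly positive real numbers σ_1 ≥ σ_2 ≥ ⋯ ≥ σ_n ≥ ⋯ > 0 (indexed by n < r), an orthonormal family (ψ_n)_{n<r} in H, and an orthonormal family (φ_n)_{n<r} in K, such that for every f ∈ H one has A f = Σ_{n<r} σ_n ⟨f, ψ_n⟩ φ_n (the series converging in K when r = ∞). -/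
/-- A positive function with finite superlevel sets can be ranked by natural numbers. -/
lemma svd_exists_rank {ι : Type*} (s : ι → ℝ) (hs : ∀ i, {j | s i ≤ s j}.Finite) :
    ∃ g : ι → ℕ, Function.Injective g ∧ ∀ i j, g i ≤ g j → s j ≤ s i := by
  classical
  let R : ι → ι → Prop := fun j i => s i < s j ∨ (s i = s j ∧ WellOrderingRel j i)
  have hirr : ∀ i, ¬ R i i := by
    rintro i (h | ⟨_, h⟩)
    · exact lt_irrefl _ h
    · exact (irrefl_of (WellOrderingRel (α := ι)) i) h
  have htrans : ∀ i j k, R i j → R j k → R i k := by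
    rintro i j k (h | ⟨h, h'⟩) (g | ⟨g, g'⟩)
    · exact Or.inl (g.trans h)
    · exact Or.inl (g ▸ h)
    · exact Or.inl (h ▸ g)
    · exact Or.inr ⟨g.trans h, trans_of (WellOrderingRel (α := ι)) h' g'⟩
  have htri : ∀ i j, i ≠ j → R i j ∨ R j i := by
    intro i j hij
    rcases lt_trichotomy (s i) (s j) with h | h | h
    · exact Or.inr (Or.inl h)
    · rcases trichotomous_of (WellOrderingRel (α := ι)) i j with h' | h' | h'
      · exact Or.inl (Or.inr ⟨h.symm, h'⟩)
      · exact absurd h' hij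
      · exact Or.inr (Or.inr ⟨h, h'⟩)
    · exact Or.inl (Or.inl h)
  have hfin : ∀ i, {j | R j i}.Finite := by
    intro i
    refine (hs i).subset ?_
    rintro j (h | ⟨h, _⟩)
    · exact h.le
    · exact h.le
  have hlt : ∀ i j, R i j → {k | R k i}.ncard < {k | R k j}.ncard := by
    intro i j hij
    refine Set.ncard_lt_ncard ?_ (hfin j)
    refine ⟨fun k hk => htrans _ _ _ hk hij, fun h => hirr i (h hij)⟩
  refine ⟨fun i => {k | R k i}.ncard, ?_, ?_⟩
  · intro i j hij
    by_contra hne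
    rcases htri i j hne with h | h
    · exact (hlt _ _ h).ne hij
    · exact (hlt _ _ h).ne hij.symm
  · intro i j hij
    by_contra! hne
    exact absurd (hlt j i (Or.inl hne)) (not_lt.mpr hij)

/-- Enumeration in nonincreasing order. -/
lemma svd_exists_enum {ι : Type*} (s : ι → ℝ) (hs : ∀ i, {j | s i ≤ s j}.Finite) :
    ∃ (r : ℕ∞) (e : {n : ℕ // (n : ℕ∞) < r} ≃ ι), ∀ m n, m.1 ≤ n.1 → s (e n) ≤ s (e m) := by
  classical
  obtain ⟨g, hg, hgs⟩ := svd_exists_rank s hs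
  let p : ℕ → Prop := fun n => n ∈ Set.range g
  have key : ∀ n : ℕ, (n : ℕ∞) < (Set.ofPred p).encard →
      ∀ hf : (Set.ofPred p).Finite, n < hf.toFinset.card := by
    intro n hn hf
    rw [hf.encard_eq_coe_toFinset_card] at hn
    exact_mod_cast hn
  have hmem : ∀ n : {n : ℕ // (n : ℕ∞) < (Set.ofPred p).encard}, ∃ i, g i = Nat.nth p n.1 :=
    fun n => Nat.nth_mem n.1 (key n.1 n.2)
  choose e he using hmem
  refine ⟨(Set.ofPred p).encard, Equiv.ofBijective e ⟨?_, ?_⟩, ?_⟩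
  · intro m n hmn
    have h : Nat.nth p m.1 = Nat.nth p n.1 := by rw [← he, ← he, hmn]
    apply Subtype.ext
    by_cases hf : (Set.ofPred p).Finite
    · exact Nat.nth_injOn hf (key _ m.2 hf) (key _ n.2 hf) h
    · exact Nat.nth_injective hf h
  · intro i
    obtain ⟨n, hn, hn'⟩ := Nat.exists_lt_card_nth_eq (p := p) (x := g i) ⟨i, rfl⟩
    have hlt : (n : ℕ∞) < (Set.ofPred p).encard := by
      by_cases hf : (Set.ofPred p).Finite
      · rw [hf.encard_eq_coe_toFinset_card]
        exact_mod_cast hn hf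
      · rw [Set.Infinite.encard_eq hf]
        exact ENat.natCast_lt_top n
    exact ⟨⟨n, hlt⟩, hg ((he _).trans hn')⟩
  · intro m n hmn
    apply hgs
    change g (e m) ≤ g (e n)
    rw [he, he]
    by_cases hf : (Set.ofPred p).Finite
    · exact (Nat.nth_le_nth_of_lt_card hf hmn (key _ n.2 hf))
    · exact Nat.nth_monotone hf hmn

set_option maxHeartbeats 1000000 in
/-- Hilbert basis of eigenvectors for a compact symmetric operator. -/
lemma svd_exists_eigenbasis.{u} {H : Type u} [NormedAddCommGroup H] [InnerProductSpace ℂ H]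
    [CompleteSpace H] (T : H →L[ℂ] H) (hT : IsCompactOperator T)
    (hT' : (T : H →ₗ[ℂ] H).IsSymmetric) :
    ∃ (ι : Type u) (b : HilbertBasis ι ℂ H) (μ : ι → ℂ), ∀ i, T (b i) = μ i • b i := by
  classical
  let V : ℂ → Submodule ℂ H := fun μ => Module.End.eigenspace (T : H →ₗ[ℂ] H) μ
  have hVc : ∀ μ, CompleteSpace (V μ) := by
    intro μ
    have : IsClosed (V μ : Set H) := by
      have h : (V μ : Set H) = {x | T x = μ • x} := by
        ext x
        simp [V]
      rw [h]
      exact isClosed_eq T.continuous (continuous_const_smul μ)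
    exact this.completeSpace_coe
  choose w b hb using fun μ => exists_hilbertBasis ℂ (V μ)
  have ho : Orthonormal ℂ (fun a : Σ μ, w μ => ((b a.1 a.2 : V a.1) : H)) :=
    hT'.orthogonalFamily_eigenspaces.orthonormal_sigma_orthonormal
      (v_family := fun μ i => b μ i) (fun μ => (b μ).orthonormal)
  have hbot : (Submodule.span ℂ (Set.range
      (fun a : Σ μ, w μ => ((b a.1 a.2 : V a.1) : H))))ᗮ = ⊥ := by
    rw [eq_bot_iff,
      ← ContinuousLinearMap.orthogonalComplement_iSup_eigenspaces_eq_bot hT hT',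
      ← Submodule.iInf_orthogonal]
    intro x hx
    rw [Submodule.mem_iInf]
    intro μ y hy
    have h1 := (b μ).hasSum_repr ⟨y, hy⟩
    have h2 := h1.mapL ((innerSL ℂ x).comp (V μ).subtypeL)
    have h3 : ∀ i, ((innerSL ℂ x).comp (V μ).subtypeL)
        ((b μ).repr ⟨y, hy⟩ i • b μ i) = 0 := by
      intro i
      have := Submodule.inner_left_of_mem_orthogonal
        (Submodule.subset_span (Set.mem_range_self (⟨μ, i⟩ : Σ μ, w μ))) hx
      simp only [map_smul]
      simp only [ContinuousLinearMap.comp_apply, Submodule.subtypeL_apply, innerSL_apply_apply]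
      rw [this, smul_zero]
    simp only [h3] at h2
    have h4 := h2.unique hasSum_zero
    rw [inner_eq_zero_symm]
    simpa using h4
  refine ⟨_, HilbertBasis.mkOfOrthogonalEqBot ho hbot, fun a => a.1, ?_⟩
  intro a
  rw [HilbertBasis.coe_mkOfOrthogonalEqBot]
  exact Module.End.mem_eigenspace_iff.mp (b a.1 a.2).2

/-- A compact operator mapping an orthonormal family to an orthogonal family has
only finitely many large values. -/
lemma svd_finite {H K ι : Type*} [NormedAddCommGroup H] [InnerProductSpace ℂ H]
    [NormedAddCommGroup K] [InnerProductSpace ℂ K]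
    (A : H →L[ℂ] K) (hA : IsCompactOperator A) (v : ι → H) (hv : ∀ i, ‖v i‖ = 1)
    (ho : ∀ i j, i ≠ j → inner ℂ (A (v i)) (A (v j)) = 0) (ε : ℝ) (hε : 0 < ε) :
    {i | ε ≤ ‖A (v i)‖}.Finite := by
  by_contra hinf
  let u := Set.Infinite.natEmbedding _ hinf
  have hK : IsCompact (closure (A '' Metric.closedBall 0 1)) :=
    IsCompactOperator.isCompact_closure_image_closedBall (f := (A : H →ₗ[ℂ] K)) hA 1
  obtain ⟨a, -, θ, hθ, hlim⟩ := hK.tendsto_subseq (x := fun n => A (v (u n).1))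
    (fun n => subset_closure ⟨v (u n).1, by simp [hv], rfl⟩)
  obtain ⟨N, hN⟩ := Metric.cauchySeq_iff.mp hlim.cauchySeq ε hε
  have h := hN N le_rfl (N + 1) (Nat.le_succ N)
  have hne : (u (θ N)).1 ≠ (u (θ (N + 1))).1 := by
    intro h
    have := hθ.injective (u.injective (Subtype.ext h))
    omega
  have hsq := norm_sub_sq (𝕜 := ℂ) (A (v (u (θ N)).1)) (A (v (u (θ (N + 1))).1))
  rw [ho _ _ hne] at hsq
  have hle : ε ≤ ‖A (v (u (θ N)).1)‖ := (u (θ N)).2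
  rw [dist_eq_norm] at h
  simp only [Function.comp_apply] at h
  simp at hsq
  nlinarith [norm_nonneg (A (v (u (θ N)).1) - A (v (u (θ (N + 1))).1)),
    sq_nonneg ‖A (v (u (θ (N + 1))).1)‖]

lemma svd_hasSum {H K ι : Type*} [NormedAddCommGroup H] [InnerProductSpace ℂ H]
    [NormedAddCommGroup K] [InnerProductSpace ℂ K]
    (A : H →L[ℂ] K) (b : HilbertBasis ι ℂ H) (f : H) :
    HasSum (fun i : {i // A (b i) ≠ 0} => (inner ℂ (b i.1) f : ℂ) • A (b i.1)) (A f) := by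
  have h1 := (b.hasSum_repr f).mapL A
  simp only [map_smul, b.repr_apply_apply] at h1
  have hsub : Function.support (fun i => (inner ℂ (b i) f : ℂ) • A (b i)) ⊆
      {i | A (b i) ≠ 0} := by
    intro i hi h
    apply hi
    change (inner ℂ (b i) f : ℂ) • A (b i) = 0
    rw [h, smul_zero]
  exact (hasSum_subtype_iff_of_support_subset hsub).mpr h1


/-- **Singular value decomposition of a compact operator.**
Let `H` and `K` be complex Hilbert spaces and `A : H → K` a compact linear operator.
Then there exist `r ∈ ℕ ∪ {∞}`, a nonincreasing family of strictly positive singular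
values `(σ n)` for `n < r`, an orthonormal family `(ψ n)` in `H` and an orthonormal
family `(φ n)` in `K`, such that `A f = Σ_{n<r} σ n ⟨f, ψ n⟩ φ n` for every `f ∈ H`
(the series converging in `K`).  Here the paper's inner product `⟨f, ψ⟩`, linear in the
first entry, is Mathlib's `inner ψ f`. -/
theorem compact_operator_has_svd {H K : Type*}
    [NormedAddCommGroup H] [InnerProductSpace ℂ H] [CompleteSpace H]
    [NormedAddCommGroup K] [InnerProductSpace ℂ K] [CompleteSpace K]
    (A : H →L[ℂ] K) (hA : IsCompactOperator A) :
    ∃ (r : ℕ∞) (σ : ℕ → ℝ) (ψ : ℕ → H) (φ : ℕ → K),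
      (∀ n : ℕ, (n : ℕ∞) < r → 0 < σ n) ∧
      (∀ m n : ℕ, (m : ℕ∞) < r → (n : ℕ∞) < r → m ≤ n → σ n ≤ σ m) ∧
      Orthonormal ℂ (fun n : {n : ℕ // (n : ℕ∞) < r} => ψ n.1) ∧
      Orthonormal ℂ (fun n : {n : ℕ // (n : ℕ∞) < r} => φ n.1) ∧
      (∀ f : H, HasSum
        (fun n : {n : ℕ // (n : ℕ∞) < r} =>
          ((σ n.1 : ℂ) * (inner ℂ (ψ n.1) f : ℂ)) • φ n.1) (A f)) := by
  classical
  let T : H →L[ℂ] H := (ContinuousLinearMap.adjoint A).comp A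
  have hTc : IsCompactOperator T := hA.clm_comp (ContinuousLinearMap.adjoint A)
  have hTs : (T : H →ₗ[ℂ] H).IsSymmetric := by
    intro x y
    change inner ℂ (ContinuousLinearMap.adjoint A (A x)) y =
      inner ℂ x (ContinuousLinearMap.adjoint A (A y))
    rw [ContinuousLinearMap.adjoint_inner_left, ContinuousLinearMap.adjoint_inner_right]
  obtain ⟨ι, b, μ, hb⟩ := svd_exists_eigenbasis T hTc hTs
  have horth : ∀ i j, i ≠ j → inner ℂ (A (b i)) (A (b j)) = 0 := by
    intro i j hij
    rw [← ContinuousLinearMap.adjoint_inner_right]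
    change inner ℂ (b i) (T (b j)) = 0
    rw [hb, inner_smul_right, b.orthonormal.2 hij, mul_zero]
  let I := {i // A (b i) ≠ 0}
  have hpos : ∀ i : I, 0 < ‖A (b i.1)‖ := fun i => norm_pos_iff.mpr i.2
  obtain ⟨r, e, he⟩ := svd_exists_enum (fun i : I => ‖A (b i.1)‖) (fun i =>
    svd_finite A hA (fun i : I => b i.1) (fun i => b.orthonormal.1 i.1)
      (fun i j hij => horth _ _ (fun h => hij (Subtype.ext h))) _ (hpos i))
  let v : ℕ → H := fun n => if h : (n : ℕ∞) < r then b (e ⟨n, h⟩).1 else 0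
  have hv : ∀ n : {n : ℕ // (n : ℕ∞) < r}, v n.1 = b (e n).1 := by
    intro n
    simp only [v, dif_pos n.2]
  have hvpos : ∀ n : {n : ℕ // (n : ℕ∞) < r}, 0 < ‖A (v n.1)‖ := by
    intro n
    rw [hv]
    exact hpos (e n)
  refine ⟨r, fun n => ‖A (v n)‖, v, fun n => ((‖A (v n)‖ : ℂ)⁻¹) • A (v n), ?_, ?_, ?_, ?_, ?_⟩
  · intro n hn
    exact hvpos ⟨n, hn⟩
  · intro m n hm hn hmn
    have := he ⟨m, hm⟩ ⟨n, hn⟩ hmn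
    rw [← hv, ← hv] at this
    exact this
  · simp only [hv]
    exact b.orthonormal.comp (fun n => (e n).1) (Subtype.val_injective.comp e.injective)
  · constructor
    · intro n
      have := hvpos n
      simp only [norm_smul, norm_inv, Complex.norm_real, norm_norm]
      exact inv_mul_cancel₀ this.ne'
    · intro m n hmn
      simp only [inner_smul_left, inner_smul_right, hv]
      rw [horth _ _ (fun h => hmn (e.injective (Subtype.ext h)))]
      simp
  · intro f
    have h3 := (e.hasSum_iff).mpr (svd_hasSum A b f)
    have hfun : (fun n : {n : ℕ // (n : ℕ∞) < r} =>
        ((‖A (v n.1)‖ : ℂ) * (inner ℂ (v n.1) f : ℂ)) • ((‖A (v n.1)‖ : ℂ)⁻¹) • A (v n.1)) =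
        (fun i : I => (inner ℂ (b i.1) f : ℂ) • A (b i.1)) ∘ e := by
      funext n
      have h0 : (‖A (v n.1)‖ : ℂ) ≠ 0 := Complex.ofReal_ne_zero.mpr (hvpos n).ne'
      rw [Function.comp_apply, ← hv, smul_smul]
      congr 1
      field_simp
    rw [← hfun] at h3
    exact h3
end

section
/- Let H and K be complex Hilbert spaces and let A : H → K be a compact linear operator with singular value decomposition A f = Σ_{n<r} σ_n ⟨f, ψ_n⟩ φ_n. For g ∈ K, the equation A f = g has a solution f ∈ H if and only if the following two conditions hold: (1) g belongs to the orthogonal complement of the kernel of the adjoint A*, and (2) Σ_{n<r} σ_n^{-2} |⟨g, φ_n⟩|² < ∞. -/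
lemma picard_coef {ι E : Type*} [NormedAddCommGroup E] [InnerProductSpace ℂ E]
    {v : ι → E} (hv : Orthonormal ℂ v) {c : ι → ℂ} {x : E}
    (h : HasSum (fun i => c i • v i) x) (j : ι) : inner ℂ (v j) x = c j := by
  classical
  have h1 := h.mapL (innerSL ℂ (v j))
  refine h1.unique ?_
  have h2 : (fun i => innerSL ℂ (v j) (c i • v i)) = fun i => if i = j then c j else 0 := by
    funext i
    simp only [innerSL_apply_apply, inner_smul_right, orthonormal_iff_ite.mp hv j i]
    by_cases hij : i = j
    · subst hij; simp
    · simp [hij, Ne.symm hij]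
  rw [h2]
  exact hasSum_ite_eq j (c j)

lemma picard_summable {ι E : Type*} [NormedAddCommGroup E] [InnerProductSpace ℂ E]
    [CompleteSpace E] {v : ι → E} (hv : Orthonormal ℂ v) {c : ι → ℂ}
    (h : Summable (fun i => ‖c i‖ ^ 2)) : Summable (fun i => c i • v i) := by
  have := (hv.orthogonalFamily.summable_iff_norm_sq_summable c).mpr h
  simpa using this

/-- **Picard criterion.**  Let `A : H → K` be a compact operator between complex Hilbert
spaces with singular value decomposition `A f = Σ_{n<r} σ n ⟨f, ψ n⟩ φ n`.  For `g ∈ K`,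
the equation `A f = g` has a solution `f ∈ H` if and only if (1) `g` belongs to the
orthogonal complement of the kernel of the adjoint `A*`, and
(2) `Σ_{n<r} σ n ^ (-2) * |⟨g, φ n⟩|² < ∞`. -/
theorem picard_criterion {H K : Type*}
    [NormedAddCommGroup H] [InnerProductSpace ℂ H] [CompleteSpace H]
    [NormedAddCommGroup K] [InnerProductSpace ℂ K] [CompleteSpace K]
    (A : H →L[ℂ] K) (hA : IsCompactOperator A)
    (r : ℕ∞) (σ : ℕ → ℝ) (ψ : ℕ → H) (φ : ℕ → K)
    (hσpos : ∀ n : ℕ, (n : ℕ∞) < r → 0 < σ n)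
    (hσmono : ∀ m n : ℕ, (m : ℕ∞) < r → (n : ℕ∞) < r → m ≤ n → σ n ≤ σ m)
    (hψ : Orthonormal ℂ (fun n : {n : ℕ // (n : ℕ∞) < r} => ψ n.1))
    (hφ : Orthonormal ℂ (fun n : {n : ℕ // (n : ℕ∞) < r} => φ n.1))
    (hsum : ∀ f : H, HasSum
      (fun n : {n : ℕ // (n : ℕ∞) < r} =>
        ((σ n.1 : ℂ) * (inner ℂ (ψ n.1) f : ℂ)) • φ n.1) (A f))
    (g : K) :
    (∃ f : H, A f = g) ↔
      (g ∈ (LinearMap.ker (ContinuousLinearMap.adjoint A : K →ₗ[ℂ] H))ᗮ ∧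
       Summable (fun n : {n : ℕ // (n : ℕ∞) < r} =>
         (σ n.1 ^ 2)⁻¹ * ‖(inner ℂ (φ n.1) g : ℂ)‖ ^ 2)) := by
  have hperp : ∀ f : H, A f ∈ (LinearMap.ker (ContinuousLinearMap.adjoint A : K →ₗ[ℂ] H))ᗮ := by
    intro f
    rw [Submodule.mem_orthogonal]
    intro u hu
    have hu' : ContinuousLinearMap.adjoint A u = 0 := hu
    rw [← ContinuousLinearMap.adjoint_inner_left, hu', inner_zero_left]
  have hcoef := fun f => picard_coef hφ (hsum f)
  constructor
  · rintro ⟨f, rfl⟩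
    refine ⟨hperp f, ?_⟩
    refine (hψ.inner_products_summable (x := f)).congr ?_
    intro n
    have hp := hσpos n.1 n.2
    rw [hcoef f n, norm_mul, mul_pow, Complex.norm_real, Real.norm_eq_abs, sq_abs]
    field_simp
  · rintro ⟨hg, hs⟩
    have hs' : Summable (fun n : {n : ℕ // (n : ℕ∞) < r} =>
        ‖((σ n.1 : ℂ)⁻¹ * (inner ℂ (φ n.1) g : ℂ))‖ ^ 2) := by
      refine hs.congr ?_
      intro n
      rw [norm_mul, mul_pow, norm_inv, Complex.norm_real, Real.norm_eq_abs, inv_pow, sq_abs]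
    obtain ⟨f, hf⟩ := picard_summable hψ hs'
    refine ⟨f, ?_⟩
    have hz : ∀ n : {n : ℕ // (n : ℕ∞) < r}, inner ℂ (φ n.1) (g - A f) = 0 := by
      intro n
      have hp : (σ n.1 : ℂ) ≠ 0 := by exact_mod_cast (hσpos n.1 n.2).ne'
      rw [inner_sub_right, hcoef f n, picard_coef hψ hf n, mul_inv_cancel_left₀ hp, sub_self]
    have hker : g - A f ∈ LinearMap.ker (ContinuousLinearMap.adjoint A : K →ₗ[ℂ] H) := by
      change ContinuousLinearMap.adjoint A (g - A f) = 0
      refine ext_inner_left ℂ fun w => ?_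
      rw [ContinuousLinearMap.adjoint_inner_right, inner_zero_right, ← inner_conj_symm]
      have h1 := (hsum w).mapL (innerSL ℂ (g - A f))
      have h2 : (inner ℂ (g - A f) (A w) : ℂ) = 0 := by
        refine h1.unique ?_
        convert hasSum_zero using 2 with n
        rw [innerSL_apply_apply, inner_smul_right, inner_eq_zero_symm.mp (hz n)]
        simp
      rw [h2, map_zero]
    have h0 := (Submodule.mem_orthogonal _ _).mp (Submodule.sub_mem _ hg (hperp f)) _ hker
    exact (sub_eq_zero.mp (inner_self_eq_zero.mp h0)).symm
end

section
/- Let H and K be complex Hilbert spaces, A : H → K a compact linear operator with pseudo-inverse A† defined on D(A†), and (T_α)_{α>0} a family of bounded linear operators T_α : K → H such that T_α g' → A† g' as α ↓ 0 for every g' ∈ D(A†). Fix g ∈ D(A†). Suppose that for each ε > 0 an element g^ε ∈ K with ‖g − g^ε‖ ≤ ε is given, and that α : (0,∞) → (0,∞) is a parameter-choice function satisfying α(ε) → 0 and ‖T_{α(ε)}‖ · ε → 0 as ε ↓ 0. Then T_{α(ε)} g^ε → A† g as ε ↓ 0; more precisely, ‖T_{α(ε)} g^ε − A† g‖ ≤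 ‖T_{α(ε)}‖ ε + ‖T_{α(ε)} g − A† g‖, and the right-hand side tends to 0. -/
/-- **Convergence of a regularization with a parameter choice rule.**
Let `A : H → K` be a compact operator between complex Hilbert spaces with singular value
decomposition, with pseudo-inverse `A†` defined on
`D(A†) = { g ∈ (ker A*)ᗮ : Σ_{n<r} σ n ^ (-2) |⟨g, φ n⟩|² < ∞ }` by
`A† g = Σ_{n<r} σ n ^ (-1) ⟨g, φ n⟩ ψ n`.  Let `(T_α)_{α>0}` be a family of bounded
operators with `T_α g' → A† g'` as `α ↓ 0` for every `g' ∈ D(A†)`.  Fix `g ∈ D(A†)`,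
data `g^ε` with `‖g - g^ε‖ ≤ ε`, and a parameter choice `α(ε) > 0` with `α(ε) → 0` and
`‖T_{α(ε)}‖ ε → 0` as `ε ↓ 0`.  Then
`‖T_{α(ε)} g^ε − A† g‖ ≤ ‖T_{α(ε)}‖ ε + ‖T_{α(ε)} g − A† g‖` and
`T_{α(ε)} g^ε → A† g` as `ε ↓ 0`. -/
theorem regularization_convergence {H K : Type*}
    [NormedAddCommGroup H] [InnerProductSpace ℂ H] [CompleteSpace H]
    [NormedAddCommGroup K] [InnerProductSpace ℂ K] [CompleteSpace K]
    (A : H →L[ℂ] K) (hA : IsCompactOperator A)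
    (r : ℕ∞) (σ : ℕ → ℝ) (ψ : ℕ → H) (φ : ℕ → K)
    (hσpos : ∀ n : ℕ, (n : ℕ∞) < r → 0 < σ n)
    (hσmono : ∀ m n : ℕ, (m : ℕ∞) < r → (n : ℕ∞) < r → m ≤ n → σ n ≤ σ m)
    (hψ : Orthonormal ℂ (fun n : {n : ℕ // (n : ℕ∞) < r} => ψ n.1))
    (hφ : Orthonormal ℂ (fun n : {n : ℕ // (n : ℕ∞) < r} => φ n.1))
    (hsum : ∀ f : H, HasSum
      (fun n : {n : ℕ // (n : ℕ∞) < r} =>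
        ((σ n.1 : ℂ) * (inner ℂ (ψ n.1) f : ℂ)) • φ n.1) (A f))
    (D : Set K)
    (hD : D = {g : K | g ∈ (LinearMap.ker (ContinuousLinearMap.adjoint A : K →ₗ[ℂ] H))ᗮ ∧
      Summable (fun n : {n : ℕ // (n : ℕ∞) < r} =>
        (σ n.1 ^ 2)⁻¹ * ‖(inner ℂ (φ n.1) g : ℂ)‖ ^ 2)})
    (Adag : K → H)
    (hAdag : ∀ g ∈ D, HasSum (fun n : {n : ℕ // (n : ℕ∞) < r} =>
      (((σ n.1)⁻¹ : ℂ) * (inner ℂ (φ n.1) g : ℂ)) • ψ n.1) (Adag g))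
    (T : ℝ → (K →L[ℂ] H))
    (hT : ∀ g' ∈ D, Filter.Tendsto (fun α : ℝ => T α g')
      (nhdsWithin 0 (Set.Ioi 0)) (nhds (Adag g')))
    (g : K) (hg : g ∈ D)
    (gε : ℝ → K) (hgε : ∀ ε : ℝ, 0 < ε → ‖g - gε ε‖ ≤ ε)
    (a : ℝ → ℝ) (ha_pos : ∀ ε : ℝ, 0 < ε → 0 < a ε)
    (ha_lim : Filter.Tendsto a (nhdsWithin 0 (Set.Ioi 0)) (nhds 0))
    (haT : Filter.Tendsto (fun ε : ℝ => ‖T (a ε)‖ * ε)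
      (nhdsWithin 0 (Set.Ioi 0)) (nhds 0)) :
    (∀ ε : ℝ, 0 < ε →
      ‖T (a ε) (gε ε) - Adag g‖ ≤ ‖T (a ε)‖ * ε + ‖T (a ε) g - Adag g‖) ∧
    Filter.Tendsto (fun ε : ℝ => T (a ε) (gε ε))
      (nhdsWithin 0 (Set.Ioi 0)) (nhds (Adag g)) := by
  have key : ∀ ε : ℝ, 0 < ε →
      ‖T (a ε) (gε ε) - Adag g‖ ≤ ‖T (a ε)‖ * ε + ‖T (a ε) g - Adag g‖ := by
    intro ε hε
    have h1 : T (a ε) (gε ε) - Adag g = T (a ε) (gε ε - g) + (T (a ε) g - Adag g) := by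
      rw [map_sub]; abel
    have h2 : ‖T (a ε) (gε ε - g)‖ ≤ ‖T (a ε)‖ * ε := by
      refine ((T (a ε)).le_opNorm _).trans ?_
      refine mul_le_mul_of_nonneg_left ?_ (norm_nonneg _)
      rw [norm_sub_rev]
      exact hgε ε hε
    rw [h1]
    exact (norm_add_le _ _).trans (by linarith)
  refine ⟨key, ?_⟩
  have ha : Filter.Tendsto a (nhdsWithin 0 (Set.Ioi 0)) (nhdsWithin 0 (Set.Ioi 0)) :=
    tendsto_nhdsWithin_iff.mpr ⟨ha_lim, by
      filter_upwards [self_mem_nhdsWithin] with ε hε using ha_pos ε hε⟩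
  have h3 := tendsto_iff_norm_sub_tendsto_zero.mp ((hT g hg).comp ha)
  have h4 := haT.add h3
  rw [add_zero] at h4
  rw [tendsto_iff_norm_sub_tendsto_zero]
  refine squeeze_zero' (Filter.Eventually.of_forall fun _ => norm_nonneg _) ?_ h4
  filter_upwards [self_mem_nhdsWithin] with ε hε using key ε hε
end

section
/- Let H and K be complex Hilbert spaces, A : H → K a bounded linear operator, α > 0, and g ∈ K. Then the operator A* A + α I : H → H is a bijective bounded linear operator, and the element f_α = (A* A + α I)^{-1} A* g is the unique minimizer over H of the Tikhonov–Phillips functional f ↦ ‖A f − g‖² + α ‖f‖². -/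
/-- **Tikhonov–Phillips regularization.**  Let `A : H → K` be a bounded linear operator
between complex Hilbert spaces, `α > 0` and `g ∈ K`.  Then `A* A + α I : H → H` is a
bijective bounded linear operator, and the element `f_α = (A* A + α I)⁻¹ A* g` (i.e. the
unique `f_α` with `(A* A + α I) f_α = A* g`) is the unique minimizer over `H` of the
Tikhonov–Phillips functional `f ↦ ‖A f − g‖² + α ‖f‖²`. -/
theorem tikhonov_phillips_unique_minimizer {H K : Type*}
    [NormedAddCommGroup H] [InnerProductSpace ℂ H] [CompleteSpace H]
    [NormedAddCommGroup K] [InnerProductSpace ℂ K] [CompleteSpace K]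
    (A : H →L[ℂ] K) (α : ℝ) (hα : 0 < α) (g : K) :
    Function.Bijective
      ⇑((ContinuousLinearMap.adjoint A).comp A + (α : ℂ) • ContinuousLinearMap.id ℂ H) ∧
    ∀ fα : H,
      ((ContinuousLinearMap.adjoint A).comp A + (α : ℂ) • ContinuousLinearMap.id ℂ H) fα
          = ContinuousLinearMap.adjoint A g →
        (∀ f : H, ‖A fα - g‖ ^ 2 + α * ‖fα‖ ^ 2 ≤ ‖A f - g‖ ^ 2 + α * ‖f‖ ^ 2) ∧
        (∀ f : H,
          (∀ f' : H, ‖A f - g‖ ^ 2 + α * ‖f‖ ^ 2 ≤ ‖A f' - g‖ ^ 2 + α * ‖f'‖ ^ 2) →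
          f = fα) := by
  have hT : ∀ f h : H, inner ℂ (((ContinuousLinearMap.adjoint A).comp A +
      (α : ℂ) • ContinuousLinearMap.id ℂ H) f) h = inner ℂ (A f) (A h) + α * inner ℂ f h := by
    intro f h
    simp [inner_add_left, inner_smul_left, ContinuousLinearMap.adjoint_inner_left]
  refine ⟨?_, ?_⟩
  · rw [← ContinuousLinearMap.isUnit_iff_bijective]
    refine ContinuousLinearMap.isUnit_of_forall_le_norm_inner_map _ (c := ⟨α, hα.le⟩) hα ?_
    intro x
    rw [hT]
    refine le_trans ?_ (Complex.re_le_norm _)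
    rw [inner_self_eq_norm_sq_to_K, inner_self_eq_norm_sq_to_K]
    have : (((‖A x‖ : ℂ)) ^ 2 + (α : ℂ) * (‖x‖ : ℂ) ^ 2).re = ‖A x‖ ^ 2 + α * ‖x‖ ^ 2 := by
      norm_cast
    refine le_trans ?_ this.ge
    change ‖x‖ ^ 2 * α ≤ _
    nlinarith [sq_nonneg ‖A x‖]
  · intro fα hf
    have key : ∀ f : H, ‖A f - g‖ ^ 2 + α * ‖f‖ ^ 2 =
        ‖A fα - g‖ ^ 2 + α * ‖fα‖ ^ 2 + (‖A (f - fα)‖ ^ 2 + α * ‖f - fα‖ ^ 2) := by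
      intro f
      have h1 := hT fα (f - fα)
      rw [hf, ContinuousLinearMap.adjoint_inner_left] at h1
      have e1 : A f - g = (A fα - g) + A (f - fα) := by rw [map_sub]; abel
      have e2 : ‖f‖ ^ 2 = ‖fα + (f - fα)‖ ^ 2 := by congr 2; abel
      rw [e1, e2, norm_add_sq (𝕜 := ℂ), norm_add_sq (𝕜 := ℂ), inner_sub_left]
      have h2 := congrArg Complex.re h1
      simp only [Complex.add_re, Complex.re_ofReal_mul] at h2
      simp only [map_sub (RCLike.re (K := ℂ)), RCLike.re_eq_complex_re]
      linarith
    refine ⟨fun f => ?_, fun f h => ?_⟩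
    · rw [key f]
      have : 0 ≤ ‖A (f - fα)‖ ^ 2 + α * ‖f - fα‖ ^ 2 := by positivity
      linarith
    · have h1 := h fα
      rw [key f] at h1
      have h2 : α * ‖f - fα‖ ^ 2 ≤ 0 := by nlinarith [sq_nonneg ‖A (f - fα)‖]
      have h3 : ‖f - fα‖ ^ 2 ≤ 0 := by
        by_contra hc
        push Not at hc
        nlinarith [mul_pos hα hc]
      have h4 : ‖f - fα‖ = 0 := by nlinarith [norm_nonneg (f - fα)]
      exact sub_eq_zero.mp (norm_eq_zero.mp h4)
end

section
/- Let H and K be complex Hilbert spaces and let A : H → K be a compact linear operator with singular value decomposition A f = Σ_{n<r} σ_n ⟨f, ψ_n⟩ φ_n. For α > 0 let T_α = (A* A + α I)^{-1} A* : K → H be the Tikhonov–Phillips regularization operator. Then for every g ∈ D(A†) one has T_α g → A† g in H as α ↓ 0. -/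
lemma inner_of_hasSum_aux {ι E : Type*} [NormedAddCommGroup E] [InnerProductSpace ℂ E]
    {v : ι → E} (hv : Orthonormal ℂ v) {c : ι → ℂ} {x : E}
    (h : HasSum (fun i => c i • v i) x) (i : ι) : inner ℂ (v i) x = c i := by
  classical
  have h1 := h.mapL (innerSL ℂ (v i))
  have h2 : HasSum (fun j => if j = i then c i else 0) (c i) := hasSum_ite_eq i (c i)
  refine h1.unique ?_
  have h3 : (fun j => innerSL ℂ (v i) (c j • v j)) = fun j => if j = i then c i else 0 := by
    funext j
    rw [innerSL_apply_apply, inner_smul_right, orthonormal_iff_ite.mp hv i j]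
    by_cases hj : j = i
    · subst hj; simp
    · simp [hj, Ne.symm hj]
  rw [h3]
  exact h2

lemma energy_aux {H K : Type*}
    [NormedAddCommGroup H] [InnerProductSpace ℂ H] [CompleteSpace H]
    [NormedAddCommGroup K] [InnerProductSpace ℂ K] [CompleteSpace K]
    (A : H →L[ℂ] K) {α : ℝ} (hα : 0 < α) (e d : H) (w : K)
    (h : (ContinuousLinearMap.adjoint A) (A e) + (α : ℂ) • e
      = - ((α : ℂ) • ((ContinuousLinearMap.adjoint A) w + d))) :
    ‖e‖ ^ 2 ≤ α * ‖w‖ ^ 2 + ‖d‖ ^ 2 := by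
  have h1 := congrArg (fun x => (inner ℂ e x : ℂ).re) h
  simp only [inner_add_right, inner_neg_right, inner_smul_right,
    ContinuousLinearMap.adjoint_inner_right, inner_self_eq_norm_sq_to_K] at h1
  have h2 : ‖A e‖ ^ 2 + α * ‖e‖ ^ 2 =
      - (α * ((inner ℂ (A e) w : ℂ).re + (inner ℂ e d : ℂ).re)) := by
    have e1 : (((‖A e‖ : ℂ)) ^ 2).re = ‖A e‖ ^ 2 := by norm_cast
    have e2 : (((‖e‖ : ℂ)) ^ 2).re = ‖e‖ ^ 2 := by norm_cast
    simpa [e1, e2] using h1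
  have h3 : -(inner ℂ (A e) w : ℂ).re ≤ ‖A e‖ * ‖w‖ :=
    (neg_le_abs _).trans ((Complex.abs_re_le_norm _).trans (norm_inner_le_norm _ _))
  have h4 : -(inner ℂ e d : ℂ).re ≤ ‖e‖ * ‖d‖ :=
    (neg_le_abs _).trans ((Complex.abs_re_le_norm _).trans (norm_inner_le_norm _ _))
  have h5 : ‖A e‖ ^ 2 + α * ‖e‖ ^ 2 ≤ α * (‖A e‖ * ‖w‖ + ‖e‖ * ‖d‖) := by
    rw [h2, ← mul_neg]
    exact mul_le_mul_of_nonneg_left (by linarith) hα.le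
  have h6 : α * ‖e‖ ^ 2 ≤ α * (α * ‖w‖ ^ 2 + ‖d‖ ^ 2) := by
    have h7 : α * (‖e‖ * ‖d‖) ≤ α * ((‖e‖ ^ 2 + ‖d‖ ^ 2) / 2) :=
      mul_le_mul_of_nonneg_left (by nlinarith [sq_nonneg (‖e‖ - ‖d‖)]) hα.le
    nlinarith [sq_nonneg (‖A e‖ - α * ‖w‖), sq_nonneg ‖A e‖]
  exact le_of_mul_le_mul_left h6 hα

/-- **Tikhonov–Phillips regularization converges to the pseudo-inverse.**
Let `A : H → K` be a compact operator between complex Hilbert spaces with singular value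
decomposition `A f = Σ_{n<r} σ n ⟨f, ψ n⟩ φ n`, and for `α > 0` let
`T_α = (A* A + α I)⁻¹ A*`, i.e. `T_α u` is the unique solution of
`(A* A + α I)(T_α u) = A* u`.  Then for every `g ∈ D(A†)` one has `T_α g → A† g` in `H`
as `α ↓ 0`, where `A† g = Σ_{n<r} σ n ^ (-1) ⟨g, φ n⟩ ψ n`. -/
theorem tikhonov_converges_to_pseudoinverse {H K : Type*}
    [NormedAddCommGroup H] [InnerProductSpace ℂ H] [CompleteSpace H]
    [NormedAddCommGroup K] [InnerProductSpace ℂ K] [CompleteSpace K]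
    (A : H →L[ℂ] K) (hA : IsCompactOperator A)
    (r : ℕ∞) (σ : ℕ → ℝ) (ψ : ℕ → H) (φ : ℕ → K)
    (hσpos : ∀ n : ℕ, (n : ℕ∞) < r → 0 < σ n)
    (hσmono : ∀ m n : ℕ, (m : ℕ∞) < r → (n : ℕ∞) < r → m ≤ n → σ n ≤ σ m)
    (hψ : Orthonormal ℂ (fun n : {n : ℕ // (n : ℕ∞) < r} => ψ n.1))
    (hφ : Orthonormal ℂ (fun n : {n : ℕ // (n : ℕ∞) < r} => φ n.1))
    (hsum : ∀ f : H, HasSum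
      (fun n : {n : ℕ // (n : ℕ∞) < r} =>
        ((σ n.1 : ℂ) * (inner ℂ (ψ n.1) f : ℂ)) • φ n.1) (A f))
    (D : Set K)
    (hD : D = {g : K | g ∈ (LinearMap.ker (ContinuousLinearMap.adjoint A : K →ₗ[ℂ] H))ᗮ ∧
      Summable (fun n : {n : ℕ // (n : ℕ∞) < r} =>
        (σ n.1 ^ 2)⁻¹ * ‖(inner ℂ (φ n.1) g : ℂ)‖ ^ 2)})
    (T : ℝ → (K →L[ℂ] H))
    (hT : ∀ α : ℝ, 0 < α → ∀ u : K,
      (ContinuousLinearMap.adjoint A) (A (T α u)) + (α : ℂ) • T α u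
        = (ContinuousLinearMap.adjoint A) u) :
    ∀ g ∈ D, ∃ fg : H,
      HasSum (fun n : {n : ℕ // (n : ℕ∞) < r} =>
        (((σ n.1)⁻¹ : ℂ) * (inner ℂ (φ n.1) g : ℂ)) • ψ n.1) fg ∧
      Filter.Tendsto (fun α : ℝ => T α g)
        (nhdsWithin 0 (Set.Ioi 0)) (nhds fg) := by
  intro g hg
  rw [hD] at hg
  obtain ⟨-, hS⟩ := hg
  have hadj : ∀ n : {n : ℕ // (n : ℕ∞) < r},
      (ContinuousLinearMap.adjoint A) (φ n.1) = (σ n.1 : ℂ) • ψ n.1 := by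
    intro n
    refine ext_inner_right ℂ fun f => ?_
    rw [ContinuousLinearMap.adjoint_inner_left, inner_of_hasSum_aux hφ (hsum f) n,
      inner_smul_left, Complex.conj_ofReal]
  have hne : ∀ n : {n : ℕ // (n : ℕ∞) < r}, (σ n.1 : ℂ) ≠ 0 := fun n =>
    Complex.ofReal_ne_zero.mpr (hσpos n.1 n.2).ne'
  have hsm : Summable (fun n : {n : ℕ // (n : ℕ∞) < r} =>
        (((σ n.1)⁻¹ : ℂ) * (inner ℂ (φ n.1) g : ℂ)) • ψ n.1) := by
    have := (hψ.orthogonalFamily.summable_iff_norm_sq_summable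
      (fun n : {n : ℕ // (n : ℕ∞) < r} => ((σ n.1)⁻¹ : ℂ) * (inner ℂ (φ n.1) g : ℂ))).mpr (by
        refine hS.congr fun n => ?_
        rw [norm_mul, mul_pow, norm_inv, Complex.norm_real, inv_pow, Real.norm_eq_abs, sq_abs])
    simpa using this
  obtain ⟨fg, hfg⟩ := hsm
  refine ⟨fg, hfg, ?_⟩
  have hφA : ∀ n : {n : ℕ // (n : ℕ∞) < r},
      (inner ℂ (φ n.1) (A fg - g) : ℂ) = 0 := by
    intro n
    rw [inner_sub_right, inner_of_hasSum_aux hφ (hsum fg) n, inner_of_hasSum_aux hψ hfg n,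
      mul_inv_cancel_left₀ (hne n), sub_self]
  have hAA : (ContinuousLinearMap.adjoint A) (A fg) = (ContinuousLinearMap.adjoint A) g := by
    rw [← sub_eq_zero, ← map_sub]
    refine ext_inner_right ℂ fun f => ?_
    rw [ContinuousLinearMap.adjoint_inner_left, inner_zero_left]
    have h1 := (hsum f).mapL (innerSL ℂ (A fg - g))
    refine h1.unique ?_
    convert hasSum_zero using 2 with n
    rw [innerSL_apply_apply, inner_smul_right, inner_eq_zero_symm.mp (hφA n), mul_zero]
  rw [Metric.tendsto_nhds]
  intro ε hε
  obtain ⟨s, hs⟩ := ((Metric.tendsto_nhds.mp hfg) (ε / 2) (by positivity)).exists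
  set p := ∑ n ∈ s, (((σ n.1)⁻¹ : ℂ) * (inner ℂ (φ n.1) g : ℂ)) • ψ n.1 with hp
  obtain ⟨w, hw⟩ : ∃ w : K, (ContinuousLinearMap.adjoint A) w = p := by
    refine ⟨∑ n ∈ s, ((((σ n.1)⁻¹ : ℂ) * (inner ℂ (φ n.1) g : ℂ)) * ((σ n.1)⁻¹ : ℂ)) • φ n.1, ?_⟩
    rw [map_sum, hp]
    refine Finset.sum_congr rfl fun n _ => ?_
    rw [map_smul, hadj, smul_smul, inv_mul_cancel_right₀ (hne n)]
  have hd : ‖fg - p‖ < ε / 2 := by rwa [dist_comm, dist_eq_norm] at hs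
  have hlim : Filter.Tendsto (fun α : ℝ => α * ‖w‖ ^ 2) (nhdsWithin 0 (Set.Ioi 0)) (nhds 0) := by
    have : Filter.Tendsto (fun α : ℝ => α * ‖w‖ ^ 2) (nhds 0) (nhds (0 * ‖w‖ ^ 2)) :=
      (continuous_id.mul continuous_const).tendsto 0
    rw [zero_mul] at this
    exact this.mono_left nhdsWithin_le_nhds
  filter_upwards [hlim.eventually (gt_mem_nhds (show (0 : ℝ) < ε ^ 2 / 2 by positivity)),
    self_mem_nhdsWithin] with α hα1 hα
  have hα : 0 < α := hα
  have key := energy_aux A hα (T α g - fg) (fg - p) w (by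
    rw [hw, add_sub_cancel, map_sub, map_sub, hAA, smul_sub, ← hT α hα g]
    abel)
  rw [dist_eq_norm]
  refine lt_of_pow_lt_pow_left₀ 2 hε.le ?_
  nlinarith [norm_nonneg (fg - p)]
end
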